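/- arXiv:math/0504504 — 2 statements merged into one kernel-verified Lean document; each statement's English description precedes it below -/
import Mathlib

section
/- For every positive integer m, the second group cohomology H²(A₅, ℤ/m) of the alternating group A₅ with coefficients in the cyclic group ℤ/m endowed with the trivial action is isomorphic, as an abelian group, to ℤ/gcd(m,2). -/
/-!
For every trivial `A₅`-module `A` one has `H²(A₅, A) ≃ A[2]`, for the following reasons.

The group `A₅` is the von Dyck group `D(2, 5, 3) = ⟨x, r | x², r⁵, (x * r)³⟩`: the cosets of `⟨r⟩`
in the latter are the images of the twelve vertices of an icosahedron, so that its order is at most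
`60`. In the central extension of `A₅` by `A` attached to a cocycle `f`, lifts of `x` and `r`
satisfy `x² = u`, `r⁵ = v` and `(x * r)³ = w` with `u, v, w` in `A`. Changing the lifts by `a` and
`b` in `A` changes `(u, v, w)` by `(2 a, 5 b, 3 (a + b))`, so the extension splits, and `f` is a
coboundary, if and only if `(u, v, w)` is of this form. As `2`, `3` and `5` are pairwise coprime,
that happens exactly when `15 u + 6 v - 10 w = 0`.

In a central extension of a group of order `60`, raising to the power `60` is a homomorphism (the
transfer), whence `20 w = 30 u + 12 v`: the obstruction `15 u + 6 v - 10 w` is killed by `2`.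
Conversely, the extension `SL(2, 5)` of `PSL(2, 5)` by `{±1}`, in which `u = -1`, yields a cocycle
with any prescribed obstruction in `A[2]`.
-/

universe u

/-! ### The von Dyck group `D(2, 5, 3)` -/

/-- The elements `a` and `b` satisfy the relations `a ^ l = b ^ m = (a * b) ^ n = 1` of the von Dyck
group `D(l, m, n)`, the group of orientation preserving symmetries of a tiling by triangles with
angles `π / l`, `π / m` and `π / n`. -/
structure IsVonDyckPair {E : Type*} [Group E] (l m n : ℕ) (a b : E) : Prop where
  pow_left : a ^ l = 1
  pow_right : b ^ m = 1
  mul_pow : (a * b) ^ n = 1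

section Icosahedron

variable {E X : Type*} [Group E] [MulAction E X] {x r : E} {v : X}

/-- The orbit of a point `v` fixed by `r`, when `x` and `r` generate a group with the relations of
`D(2, 5, 3)`: the vertices of an icosahedron with poles `v` and `(true, none)`, each of which is
surrounded by a pentagon on which `r` acts by rotation. -/
def icosahedronVertex (x r : E) (v : X) : Bool × Option (Fin 5) → X
  | (false, none) => v
  | (false, some k) => r ^ (k : ℕ) • x • v
  | (true, some k) => r ^ (k : ℕ) • x • r ^ 2 • x • v
  | (true, none) => x • r ^ 3 • x • r ^ 2 • x • v

namespace IsVonDyckPair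

theorem smul_smul_self (h : IsVonDyckPair 2 5 3 x r) (p : X) : x • x • p = p := by
  rw [smul_smul, ← pow_two, h.pow_left, one_smul]

theorem pow_smul_pow_smul (h : IsVonDyckPair 2 5 3 x r) (i j : ℕ) (p : X) :
    r ^ i • r ^ j • p = r ^ ((i + j) % 5) • p := by
  rw [smul_smul, ← pow_add, pow_eq_pow_mod _ h.pow_right]

-- Here and below `r ^ 1` is not simplified to `r`: with every power of `r` explicit,
-- `pow_smul_pow_smul` alone normalises all the words that occur.
theorem smul_pow_one_smul (h : IsVonDyckPair 2 5 3 x r) (p : X) :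
    x • r ^ 1 • x • p = r ^ 4 • x • r ^ 4 • p := by
  have hx : x⁻¹ = x := inv_eq_of_mul_eq_one_left (by rw [← pow_two, h.pow_left])
  have hr : r⁻¹ = r ^ 4 := inv_eq_of_mul_eq_one_left (by rw [← pow_succ, h.pow_right])
  have hxr : x * r * x * (r * x * r) = 1 := by
    rw [← h.mul_pow]
    simp only [pow_succ, pow_zero, one_mul, mul_assoc]
  have hconj : x * r * x = r ^ 4 * x * r ^ 4 := by
    rw [eq_inv_of_mul_eq_one_left hxr]
    simp only [mul_inv_rev, hx, hr, mul_assoc]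
  simpa only [mul_smul, pow_one] using congrArg (· • p) hconj

theorem smul_pow_four_smul (h : IsVonDyckPair 2 5 3 x r) (p : X) :
    x • r ^ 4 • x • p = r ^ 1 • x • r ^ 1 • p := by
  have hp := congrArg (x • ·) (h.smul_pow_one_smul (r ^ 1 • p))
  simpa only [h.smul_smul_self, h.pow_smul_pow_smul, Nat.reduceAdd, Nat.reduceMod, pow_zero,
    one_smul] using hp.symm

theorem smul_lower_pentagon (h : IsVonDyckPair 2 5 3 x r) (hv : r ^ 1 • v = v) :
    x • r ^ 1 • x • v = r ^ 4 • x • v ∧ x • r ^ 3 • x • v = r ^ 1 • x • r ^ 2 • x • v ∧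
      x • r ^ 4 • x • v = r ^ 1 • x • v := by
  have hr := h.pow_smul_pow_smul (X := X)
  have hv4 : r ^ 4 • v = v := by
    conv_rhs => rw [← one_smul E v, ← h.pow_right, pow_succ, mul_smul, ← pow_one r, hv, pow_one]
  have h1 : x • r ^ 1 • x • v = r ^ 4 • x • v := by rw [h.smul_pow_one_smul, hv4]
  refine ⟨h1, ?_, by rw [h.smul_pow_four_smul, hv]⟩
  calc x • r ^ 3 • x • v = x • r ^ 4 • x • r ^ 1 • x • v := by rw [h1, hr]
    _ = r ^ 1 • x • r ^ 2 • x • v := by rw [h.smul_pow_four_smul, hr]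

theorem smul_upper_pentagon (h : IsVonDyckPair 2 5 3 x r) (hv : r ^ 1 • v = v) :
    x • r ^ 1 • x • r ^ 2 • x • v = r ^ 3 • x • v ∧
      x • r ^ 2 • x • r ^ 2 • x • v = r ^ 4 • x • r ^ 2 • x • v ∧
      x • r ^ 4 • x • r ^ 2 • x • v = r ^ 2 • x • r ^ 2 • x • v := by
  have hr := h.pow_smul_pow_smul (X := X)
  obtain ⟨h1, h3, -⟩ := h.smul_lower_pentagon hv
  refine ⟨?_, ?_, ?_⟩
  · rw [h.smul_pow_one_smul, hr, h1, hr]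
  · calc x • r ^ 2 • x • r ^ 2 • x • v = x • r ^ 1 • x • r ^ 3 • x • v := by rw [h3, hr]
      _ = r ^ 4 • x • r ^ 2 • x • v := by rw [h.smul_pow_one_smul, hr]
  · rw [h.smul_pow_four_smul, hr, h3, hr]

theorem rotation_smul_antipode (h : IsVonDyckPair 2 5 3 x r) (hv : r ^ 1 • v = v) :
    r ^ 1 • x • r ^ 3 • x • r ^ 2 • x • v = x • r ^ 3 • x • r ^ 2 • x • v := by
  have hr := h.pow_smul_pow_smul (X := X)
  obtain ⟨-, h2, -⟩ := h.smul_upper_pentagon hv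
  calc r ^ 1 • x • r ^ 3 • x • r ^ 2 • x • v
      = x • r ^ 4 • x • r ^ 2 • x • r ^ 2 • x • v := by rw [h.smul_pow_four_smul, hr]
    _ = x • r ^ 3 • x • r ^ 2 • x • v := by rw [h2, hr]

theorem smul_icosahedronVertex_mem (h : IsVonDyckPair 2 5 3 x r) (hv : r ^ 1 • v = v)
    (i : Bool × Option (Fin 5)) :
    x • icosahedronVertex x r v i ∈ Set.range (icosahedronVertex x r v) := by
  have hx := h.smul_smul_self (X := X)
  have hr0 (p : X) : r ^ 0 • p = p := by rw [pow_zero, one_smul]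
  obtain ⟨hl1, hl3, hl4⟩ := h.smul_lower_pentagon hv
  obtain ⟨hu1, hu2, hu4⟩ := h.smul_upper_pentagon hv
  rcases i with ⟨_ | _, _ | k⟩
  · exact ⟨(false, some 0), hr0 _⟩
  · fin_cases k
    · exact ⟨(false, none), ((congrArg (x • ·) (hr0 _)).trans (hx _)).symm⟩
    · exact ⟨(false, some 4), hl1.symm⟩
    · exact ⟨(true, some 0), hr0 _⟩
    · exact ⟨(true, some 1), hl3.symm⟩
    · exact ⟨(false, some 1), hl4.symm⟩
  · exact ⟨(true, some 3), (hx _).symm⟩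
  · fin_cases k
    · exact ⟨(false, some 2), ((congrArg (x • ·) (hr0 _)).trans (hx _)).symm⟩
    · exact ⟨(false, some 3), hu1.symm⟩
    · exact ⟨(true, some 4), hu2.symm⟩
    · exact ⟨(true, none), rfl⟩
    · exact ⟨(true, some 2), hu4.symm⟩

theorem rotation_smul_icosahedronVertex_mem (h : IsVonDyckPair 2 5 3 x r) (hv : r ^ 1 • v = v)
    (i : Bool × Option (Fin 5)) :
    r • icosahedronVertex x r v i ∈ Set.range (icosahedronVertex x r v) := by
  have hr1 (p : X) : r • p = r ^ 1 • p := by rw [pow_one]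
  rw [hr1]
  rcases i with ⟨_ | _, _ | k⟩
  · exact ⟨(false, none), hv.symm⟩
  · exact ⟨(false, some (1 + k)), (h.pow_smul_pow_smul 1 k _).symm⟩
  · exact ⟨(true, none), (h.rotation_smul_antipode hv).symm⟩
  · exact ⟨(true, some (1 + k)), (h.pow_smul_pow_smul 1 k _).symm⟩

open scoped Pointwise in
theorem icosahedronVertex_surjective [MulAction.IsPretransitive E X]
    (h : IsVonDyckPair 2 5 3 x r) (hgen : Subgroup.closure {x, r} = ⊤) (hv : r • v = v) :
    Function.Surjective (icosahedronVertex x r v) := by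
  rw [← pow_one r] at hv
  have hstab : MulAction.stabilizer E (Set.range (icosahedronVertex x r v)) = ⊤ := by
    rw [eq_top_iff, ← hgen, Subgroup.closure_le]
    rintro _ (rfl | rfl) <;>
      rw [SetLike.mem_coe,
        MulAction.mem_stabilizer_set_iff_smul_set_subset (Set.finite_range _)] <;>
      rintro _ ⟨_, ⟨i, rfl⟩, rfl⟩
    · exact h.smul_icosahedronVertex_mem hv i
    · exact h.rotation_smul_icosahedronVertex_mem hv i
  intro p
  obtain ⟨g, rfl⟩ := MulAction.exists_smul_eq E v p
  have hg : g ∈ MulAction.stabilizer E (Set.range (icosahedronVertex x r v)) := by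
    rw [hstab]; trivial
  exact (MulAction.mem_stabilizer_set.1 hg _).2 ⟨(false, none), rfl⟩

theorem finite_and_card_le_sixty (h : IsVonDyckPair 2 5 3 x r)
    (hgen : Subgroup.closure {x, r} = ⊤) : Finite E ∧ Nat.card E ≤ 60 := by
  have hfix : r • ((1 : E) : E ⧸ Subgroup.zpowers r) = (1 : E) :=
    QuotientGroup.eq.2 (by simp)
  have hsurj := h.icosahedronVertex_surjective hgen hfix
  have : Finite (E ⧸ Subgroup.zpowers r) := Finite.of_surjective _ hsurj
  have : Finite (Subgroup.zpowers r) :=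
    (isOfFinOrder_iff_pow_eq_one.2 ⟨5, by norm_num, h.pow_right⟩).finite_zpowers
  refine ⟨Finite.of_subgroup_quotient (Subgroup.zpowers r), ?_⟩
  have hindex : Nat.card (E ⧸ Subgroup.zpowers r) ≤ 12 := by
    simpa using Nat.card_le_card_of_surjective _ hsurj
  have horder : orderOf r ≤ 5 := orderOf_le_of_pow_eq_one (by norm_num) h.pow_right
  rw [Subgroup.card_eq_card_quotient_mul_card_subgroup (Subgroup.zpowers r), Nat.card_zpowers]
  exact Nat.mul_le_mul hindex horder

end IsVonDyckPair

end Icosahedron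

/-- The relators `x ^ l`, `y ^ m` and `(x * y) ^ n` of the von Dyck group `D(l, m, n)`, as words in
the free group on the generators `x = of 0` and `y = of 1`. -/
def vonDyckRelators (l m n : ℕ) : Set (FreeGroup (Fin 2)) :=
  {FreeGroup.of 0 ^ l, FreeGroup.of 1 ^ m, (FreeGroup.of 0 * FreeGroup.of 1) ^ n}

theorem forall_mem_vonDyckRelators_iff {l m n : ℕ} {p : FreeGroup (Fin 2) → Prop} :
    (∀ w ∈ vonDyckRelators l m n, p w) ↔
      p (FreeGroup.of 0 ^ l) ∧ p (FreeGroup.of 1 ^ m) ∧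
        p ((FreeGroup.of 0 * FreeGroup.of 1) ^ n) := by
  simp [vonDyckRelators]

theorem IsVonDyckPair.lift_eq_one {E : Type*} [Group E] {l m n : ℕ} {s : Fin 2 → E}
    (h : IsVonDyckPair l m n (s 0) (s 1)) :
    ∀ w ∈ vonDyckRelators l m n, FreeGroup.lift s w = 1 := by
  simpa only [forall_mem_vonDyckRelators_iff, map_pow, map_mul, FreeGroup.lift_apply_of] using
    ⟨h.pow_left, h.pow_right, h.mul_pow⟩

theorem isVonDyckPair_presentedGroup (l m n : ℕ) :
    IsVonDyckPair (E := PresentedGroup (vonDyckRelators l m n)) l m n (.of 0) (.of 1) := by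
  obtain ⟨hl, hr, hm⟩ := forall_mem_vonDyckRelators_iff.1 fun w hw ↦
    PresentedGroup.one_of_mem (rels := vonDyckRelators l m n) hw
  exact ⟨hl, hr, hm⟩

theorem finite_and_card_presentedGroup_vonDyckRelators_le_sixty :
    Finite (PresentedGroup (vonDyckRelators 2 5 3)) ∧
      Nat.card (PresentedGroup (vonDyckRelators 2 5 3)) ≤ 60 := by
  refine (isVonDyckPair_presentedGroup 2 5 3).finite_and_card_le_sixty ?_
  rw [← PresentedGroup.closure_range_of]
  congr 1
  ext g
  simp [Fin.exists_fin_two, eq_comm]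

open Equiv in
/-- A half turn and a fifth of a turn of the icosahedron whose product is a third of a turn, as even
permutations. -/
def icosahedralGenerator : Fin 2 → alternatingGroup (Fin 5) :=
  ![⟨swap 0 1 * swap 2 3, Perm.mem_alternatingGroup.2 (by decide)⟩,
    ⟨finRotate 5, Perm.mem_alternatingGroup.2 (by decide)⟩]

theorem isVonDyckPair_icosahedralGenerator :
    IsVonDyckPair 2 5 3 (icosahedralGenerator 0) (icosahedralGenerator 1) :=
  ⟨by decide, by decide, by decide⟩

theorem natCard_alternatingGroup_five : Nat.card (alternatingGroup (Fin 5)) = 60 := by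
  rw [nat_card_alternatingGroup, Nat.card_fin]
  rfl

theorem index_ne_two_of_isSimpleGroup {G : Type*} [Group G] [IsSimpleGroup G]
    (hG : Nat.card G ≠ 2) (H : Subgroup G) : H.index ≠ 2 := by
  intro h
  rcases (Subgroup.normal_of_index_eq_two h).eq_bot_or_eq_top with rfl | rfl
  · exact hG (Subgroup.index_bot.symm.trans h)
  · simp at h

theorem thirty_dvd_card_of_icosahedralGenerator_mem {H : Subgroup (alternatingGroup (Fin 5))}
    (hH : ∀ i, icosahedralGenerator i ∈ H) : 30 ∣ Nat.card H := by
  have h := isVonDyckPair_icosahedralGenerator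
  have hdvd {g : alternatingGroup (Fin 5)} {p : ℕ} (hp : p.Prime) (hgp : g ^ p = 1) (hg : g ≠ 1)
      (hmem : g ∈ H) : p ∣ Nat.card H :=
    have : Fact p.Prime := ⟨hp⟩
    orderOf_eq_prime hgp hg ▸ H.orderOf_dvd_natCard hmem
  have h2 : 2 ∣ Nat.card H := hdvd Nat.prime_two h.pow_left (by decide) (hH 0)
  have h5 : 5 ∣ Nat.card H := hdvd Nat.prime_five h.pow_right (by decide) (hH 1)
  have h3 : 3 ∣ Nat.card H :=
    hdvd Nat.prime_three h.mul_pow (by decide) (mul_mem (hH 0) (hH 1))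
  lia

theorem closure_range_icosahedralGenerator :
    Subgroup.closure (Set.range icosahedralGenerator) = ⊤ := by
  have : IsSimpleGroup (alternatingGroup (Fin 5)) := alternatingGroup.isSimpleGroup (by simp)
  set H := Subgroup.closure (Set.range icosahedralGenerator)
  obtain ⟨d, hd⟩ : 30 ∣ Nat.card H :=
    thirty_dvd_card_of_icosahedralGenerator_mem fun i ↦ Subgroup.subset_closure ⟨i, rfl⟩
  have hdvd : H.index ∣ 2 := by
    have hmul := H.card_mul_index.trans natCard_alternatingGroup_five
    rw [hd] at hmul
    exact Dvd.intro_left d (by linarith)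
  refine Subgroup.index_eq_one.1 (((Nat.dvd_prime Nat.prime_two).1 hdvd).resolve_right ?_)
  exact index_ne_two_of_isSimpleGroup
    (natCard_alternatingGroup_five.trans_ne (by decide)) H

theorem exists_presentedGroup_vonDyckRelators_mulEquiv :
    ∃ e : PresentedGroup (vonDyckRelators 2 5 3) ≃* alternatingGroup (Fin 5),
      ∀ i, e (.of i) = icosahedralGenerator i := by
  let φ := PresentedGroup.toGroup isVonDyckPair_icosahedralGenerator.lift_eq_one
  have hφ (i : Fin 2) : φ (.of i) = icosahedralGenerator i := PresentedGroup.toGroup.of _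
  have hsurj : Function.Surjective φ := by
    rw [← MonoidHom.range_eq_top, eq_top_iff, ← closure_range_icosahedralGenerator,
      Subgroup.closure_le]
    rintro _ ⟨i, rfl⟩
    exact ⟨.of i, hφ i⟩
  obtain ⟨_, hcard⟩ := finite_and_card_presentedGroup_vonDyckRelators_le_sixty
  exact ⟨.ofBijective φ (hsurj.bijective_of_nat_card_le
    (hcard.trans natCard_alternatingGroup_five.ge)), hφ⟩

/-! ### Extensions attached to cocycles -/

theorem lift_mul_of_commute {α M E : Type*} [Group M] [Group E] {j : M →* E}
    (hj : ∀ m e, Commute (j m) e) (c : α → M) (y : α → E) (w : FreeGroup α) :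
    FreeGroup.lift (fun i ↦ j (c i) * y i) w = j (FreeGroup.lift c w) * FreeGroup.lift y w := by
  have h : FreeGroup.lift (fun i ↦ j (c i) * y i) =
      (j.noncommCoprod (.id E) hj).comp ((FreeGroup.lift c).prod (FreeGroup.lift y)) := by
    ext i
    simp
  exact DFunLike.congr_fun h w

section Extension

open groupCohomology

variable {k G : Type u} [CommRing k] [Group G] {A : Rep k G}

/-- The extension of `G` by `A` attached to a `2`-cocycle `f`: the set `A × G` with the product
`(a, g) * (b, h) = (a + g • b + f (g, h), g * h)`. As `f` need not be normalised, the unit is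
`(-f (1, 1), 1)`. -/
@[ext]
structure CocycleExtension (f : cocycles₂ A) where
  /-- The component in the kernel of the extension. -/
  fib : A
  /-- The component in the quotient of the extension. -/
  base : G

namespace CocycleExtension

section Group

variable (f : cocycles₂ A)

instance : Mul (CocycleExtension f) :=
  ⟨fun p q ↦ ⟨p.fib + A.ρ p.base q.fib + f (p.base, q.base), p.base * q.base⟩⟩

instance : One (CocycleExtension f) :=
  ⟨⟨-f (1, 1), 1⟩⟩

instance : Inv (CocycleExtension f) :=
  ⟨fun p ↦ ⟨-A.ρ p.base⁻¹ p.fib - f (p.base⁻¹, p.base) - f (1, 1), p.base⁻¹⟩⟩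

variable {f}

@[simp] theorem mul_fib (p q : CocycleExtension f) :
    (p * q).fib = p.fib + A.ρ p.base q.fib + f (p.base, q.base) := rfl

@[simp] theorem mul_base (p q : CocycleExtension f) : (p * q).base = p.base * q.base := rfl

@[simp] theorem one_fib : (1 : CocycleExtension f).fib = -f (1, 1) := rfl

@[simp] theorem one_base : (1 : CocycleExtension f).base = 1 := rfl

@[simp] theorem inv_fib (p : CocycleExtension f) :
    p⁻¹.fib = -A.ρ p.base⁻¹ p.fib - f (p.base⁻¹, p.base) - f (1, 1) := rfl

@[simp] theorem inv_base (p : CocycleExtension f) : p⁻¹.base = p.base⁻¹ := rfl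

instance : Group (CocycleExtension f) :=
  Group.ofLeftAxioms
    (fun p q r ↦ by
      have hf := (mem_cocycles₂_iff f).1 f.2 p.base q.base r.base
      ext
      · simp only [mul_fib, mul_base, map_add, map_mul, Module.End.mul_apply]
        rw [← sub_eq_zero] at hf ⊢
        rw [← hf]
        abel
      · exact mul_assoc _ _ _)
    (fun p ↦ by
      ext
      · simp [cocycles₂_map_one_fst]
      · exact one_mul _)
    (fun p ↦ by
      ext
      · simp only [mul_fib, inv_fib, inv_base, one_fib]
        abel
      · exact inv_mul_cancel _)

end Group

variable {f : cocycles₂ A}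

variable (f) in
/-- The cocycle extension `0 → A → CocycleExtension f → G → 1`. -/
def toGroupExtension : GroupExtension (Multiplicative A) (CocycleExtension f) G where
  inl :=
    { toFun := fun a ↦ ⟨a.toAdd - f (1, 1), 1⟩
      map_one' := by ext <;> simp
      map_mul' := fun a b ↦ by
        ext
        · simp only [toAdd_mul, mul_fib, map_one, Module.End.one_apply]
          abel
        · exact (one_mul 1).symm }
  rightHom :=
    { toFun := base
      map_one' := rfl
      map_mul' := fun _ _ ↦ rfl }
  inl_injective := fun a b h ↦ by simpa using congrArg fib h
  range_inl_eq_ker_rightHom := by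
    ext p
    refine ⟨?_, fun hp ↦ ⟨.ofAdd (p.fib + f (1, 1)), ?_⟩⟩
    · rintro ⟨a, rfl⟩
      rfl
    · ext
      · simp
      · exact (MonoidHom.mem_ker.1 hp).symm
  rightHom_surjective := fun g ↦ ⟨⟨0, g⟩, rfl⟩

@[simp] theorem inl_fib (a : Multiplicative A) :
    ((toGroupExtension f).inl a).fib = a.toAdd - f (1, 1) := rfl

@[simp] theorem inl_base (a : Multiplicative A) : ((toGroupExtension f).inl a).base = 1 := rfl

@[simp] theorem rightHom_apply (p : CocycleExtension f) :
    (toGroupExtension f).rightHom p = p.base := rfl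

theorem eq_inl_of_base_eq_one {p : CocycleExtension f} (hp : p.base = 1) :
    p = (toGroupExtension f).inl (.ofAdd (p.fib + f (1, 1))) := by
  ext <;> simp [hp]

theorem eq_inl_mul (p : CocycleExtension f) :
    p = (toGroupExtension f).inl (.ofAdd p.fib) * ⟨0, p.base⟩ := by
  ext <;> simp [cocycles₂_map_one_fst]

theorem splitting_base (σ : (toGroupExtension f).Splitting) (g : G) : (σ.toMonoidHom g).base = g :=
  σ.rightInverse_rightHom g

theorem mem_coboundaries₂_iff_nonempty_splitting :
    ⇑f ∈ coboundaries₂ A ↔ Nonempty (toGroupExtension f).Splitting := by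
  constructor
  · rintro ⟨φ, hφ⟩
    have hf (g h : G) : f (g, h) = A.ρ g (φ h) - φ (g * h) + φ g := (congrFun hφ (g, h)).symm
    refine ⟨⟨⟨⟨fun g ↦ ⟨-φ g, g⟩, ?_⟩, fun g h ↦ ?_⟩, fun g ↦ rfl⟩⟩
    · ext <;> simp [hf]
    · ext
      · simp [hf]
        abel
      · rfl
  · rintro ⟨σ⟩
    refine ⟨fun g ↦ -(σ.toMonoidHom g).fib, funext fun ⟨g, h⟩ ↦ ?_⟩
    have hmul := congrArg fib (map_mul σ.toMonoidHom g h)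
    simp only [mul_fib, splitting_base] at hmul
    change A.ρ g (-_) - (-_) + (-_) = f (g, h)
    rw [hmul, map_neg]
    abel

theorem commute_inl [A.IsTrivial] (a : Multiplicative A) (p : CocycleExtension f) :
    Commute ((toGroupExtension f).inl a) p := by
  ext
  · simp only [mul_fib, inl_fib, inl_base, Representation.isTrivial_apply,
      cocycles₂_map_one_fst f p.base, cocycles₂_map_one_snd f p.base]
    abel
  · simp

section RelatorValue

variable {α : Type*} (s : α → G)

variable (f) in
/-- The evaluation of words at the lifts `(0, s i)` of elements `s i` of `G`. -/
def liftWord : FreeGroup α →* CocycleExtension f :=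
  FreeGroup.lift fun i ↦ ⟨0, s i⟩

@[simp] theorem liftWord_of (i : α) : liftWord f s (.of i) = ⟨0, s i⟩ :=
  FreeGroup.lift_apply_of

@[simp] theorem liftWord_base (w : FreeGroup α) : (liftWord f s w).base = FreeGroup.lift s w := by
  have h : (toGroupExtension f).rightHom.comp (liftWord f s) = FreeGroup.lift s := by
    ext i
    simp
  exact DFunLike.congr_fun h w

theorem liftWord_fib_eq_smul_add_smul {F : cocycles₂ A} {c c' : k} {f f' : cocycles₂ A}
    (hF : ∀ p, F p = c • f p + c' • f' p) (w : FreeGroup α) :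
    (liftWord F s w).fib = c • (liftWord f s w).fib + c' • (liftWord f' s w).fib := by
  induction w using FreeGroup.induction_on with
  | C1 =>
    simp only [map_one, one_fib, hF, smul_neg]
    abel
  | of i => simp
  | inv_of i _ =>
    simp only [map_inv, liftWord_of, inv_fib, hF, map_zero, smul_sub, smul_neg, smul_zero]
    abel
  | mul v w hv hw =>
    simp only [map_mul, mul_fib, liftWord_base, hv, hw, hF, map_add, map_smul, smul_add]
    abel

/-- The element of `A` to which a relator `w` of the elements `s i` of `G` evaluates at their lifts
`(0, s i)` in the extension of a cocycle `f`, as a linear function of `f`. -/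
def relatorValue (w : FreeGroup α) : cocycles₂ A →ₗ[k] A where
  toFun f := (liftWord f s w).fib + f (1, 1)
  map_add' f f' := by
    have hF (p) : (f + f') p = (1 : k) • f p + (1 : k) • f' p := by
      simp only [one_smul]
      rfl
    rw [liftWord_fib_eq_smul_add_smul s hF, hF, one_smul, one_smul, one_smul, one_smul]
    abel
  map_smul' c f := by
    have hF (p) : (c • f) p = c • f p + (0 : k) • f p := by
      simp only [zero_smul, add_zero]
      rfl
    rw [liftWord_fib_eq_smul_add_smul s hF, hF, zero_smul, zero_smul, add_zero, add_zero,
      RingHom.id_apply, smul_add]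

theorem liftWord_eq_inl_relatorValue {w : FreeGroup α} (hw : FreeGroup.lift s w = 1) :
    liftWord f s w = (toGroupExtension f).inl (.ofAdd (relatorValue s w f)) :=
  eq_inl_of_base_eq_one (by rw [liftWord_base, hw])

end RelatorValue

section Presentation

variable {α : Type*} {rels : Set (FreeGroup α)} [A.IsTrivial]

theorem lift_inl_mul (s : α → G) (c : α → Multiplicative A) {w : FreeGroup α}
    (hw : FreeGroup.lift s w = 1) :
    FreeGroup.lift (fun i ↦ (toGroupExtension f).inl (c i) * ⟨0, s i⟩) w =
      (toGroupExtension f).inl (FreeGroup.lift c w * .ofAdd (relatorValue s w f)) := by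
  rw [lift_mul_of_commute commute_inl, map_mul, ← liftWord_eq_inl_relatorValue s hw, liftWord]

theorem mem_coboundaries₂_iff_relatorValue (e : PresentedGroup rels ≃* G) :
    ⇑f ∈ coboundaries₂ A ↔ ∃ c : α → Multiplicative A, ∀ w ∈ rels,
      (FreeGroup.lift c w).toAdd + relatorValue (fun i ↦ e (.of i)) w f = 0 := by
  set s : α → G := fun i ↦ e (.of i)
  have hs {w : FreeGroup α} (hw : w ∈ rels) : FreeGroup.lift s w = 1 := by
    have h : FreeGroup.lift s = e.toMonoidHom.comp (PresentedGroup.mk rels) := by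
      ext i
      simp [s, PresentedGroup.of]
    rw [h, MonoidHom.comp_apply, PresentedGroup.one_of_mem hw, map_one]
  rw [mem_coboundaries₂_iff_nonempty_splitting]
  constructor
  · rintro ⟨σ⟩
    refine ⟨fun i ↦ .ofAdd (σ.toMonoidHom (s i)).fib, fun w hw ↦ ?_⟩
    have hσ : σ.toMonoidHom.comp (FreeGroup.lift s) = FreeGroup.lift fun i ↦
        (toGroupExtension f).inl (.ofAdd (σ.toMonoidHom (s i)).fib) * ⟨0, s i⟩ := by
      ext1 i
      rw [MonoidHom.comp_apply, FreeGroup.lift_apply_of, FreeGroup.lift_apply_of]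
      exact (eq_inl_mul _).trans (by rw [splitting_base])
    have hw1 := DFunLike.congr_fun hσ w
    rw [MonoidHom.comp_apply, hs hw, map_one, lift_inl_mul s _ (hs hw), eq_comm,
      map_eq_one_iff _ (toGroupExtension f).inl_injective] at hw1
    exact hw1
  · rintro ⟨c, hc⟩
    have hrels (w) (hw : w ∈ rels) :
        FreeGroup.lift (fun i ↦ (toGroupExtension f).inl (c i) * ⟨0, s i⟩) w = 1 := by
      rw [lift_inl_mul s c (hs hw), map_eq_one_iff _ (toGroupExtension f).inl_injective]
      exact hc w hw
    refine ⟨⟨(PresentedGroup.toGroup hrels).comp e.symm.toMonoidHom, ?_⟩⟩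
    have hcomp : (toGroupExtension f).rightHom.comp (PresentedGroup.toGroup hrels) =
        e.toMonoidHom := by
      ext i
      simp [s]
    intro g
    simpa using DFunLike.congr_fun hcomp (e.symm g)

end Presentation

end CocycleExtension

end Extension

/-! ### Central extensions -/

theorem mul_pow_index_of_le_center {E : Type*} [Group E] {K : Subgroup E} [K.FiniteIndex]
    (hK : K ≤ Subgroup.center E) (a b : E) : (a * b) ^ K.index = a ^ K.index * b ^ K.index := by
  have : (Subgroup.center E).FiniteIndex := Subgroup.finiteIndex_of_le hK
  set n := (Subgroup.center E).index
  have hcentral : (a * b) ^ n = a ^ n * b ^ n :=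
    congrArg Subtype.val (map_mul (MonoidHom.transferCenterPow E) a b)
  have hcomm : Commute (a ^ n) (b ^ n) :=
    Subgroup.mem_center_iff.1 (MonoidHom.transferCenterPow E b).2 (a ^ n)
  obtain ⟨d, hd⟩ : n ∣ K.index := Subgroup.index_dvd_of_le hK
  rw [hd, pow_mul, hcentral, hcomm.mul_pow, ← pow_mul, ← pow_mul]

theorem CocycleExtension.mul_pow_card {k G : Type u} [CommRing k] [Group G] [Finite G]
    {A : Rep k G} [A.IsTrivial] {f : groupCohomology.cocycles₂ A} (p q : CocycleExtension f) :
    (p * q) ^ Nat.card G = p ^ Nat.card G * q ^ Nat.card G := by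
  let S := toGroupExtension f
  have hindex : S.inl.range.index = Nat.card G := by
    rw [S.range_inl_eq_ker_rightHom, Subgroup.index_ker,
      MonoidHom.range_eq_top.2 S.rightHom_surjective, Subgroup.card_top]
  have : S.inl.range.FiniteIndex := ⟨hindex ▸ Nat.card_pos.ne'⟩
  rw [← hindex]
  refine mul_pow_index_of_le_center ?_ p q
  rintro _ ⟨a, rfl⟩
  exact Subgroup.mem_center_iff.2 fun p ↦ ((commute_inl a p).eq).symm

section FactorSet

open groupCohomology

variable {G : Type u} {E : Type*} [Group G] [Group E] {N : Subgroup E} {ρ : G → E}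

theorem factorSet_mul_eq (hN : N ≤ Subgroup.center E)
    (hρ : ∀ g h, ρ g * ρ h * (ρ (g * h))⁻¹ ∈ N) (g h j : G) :
    ρ (g * h) * ρ j * (ρ (g * h * j))⁻¹ * (ρ g * ρ h * (ρ (g * h))⁻¹) =
      ρ h * ρ j * (ρ (h * j))⁻¹ * (ρ g * ρ (h * j) * (ρ (g * (h * j)))⁻¹) := by
  rw [Subgroup.mem_center_iff.1 (hN (hρ g h)), ← mul_assoc (ρ h * ρ j * _), ← mul_assoc _ (ρ g),
    ← Subgroup.mem_center_iff.1 (hN (hρ h j)) (ρ g)]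
  simp only [← mul_assoc, inv_mul_cancel_right]

variable {k : Type u} [CommRing k] (A : Rep k G) [A.IsTrivial]

/-- The cocycle `(g, h) ↦ χ (ρ g * ρ h * (ρ (g * h))⁻¹)` of a map `ρ` that is a homomorphism up to
elements of a central subgroup `N`, with coefficients in `A` by way of the character `χ` of `N`. -/
def factorSet (hN : N ≤ Subgroup.center E) (hρ : ∀ g h, ρ g * ρ h * (ρ (g * h))⁻¹ ∈ N)
    (χ : N →* Multiplicative A) : cocycles₂ A :=
  ⟨fun p ↦ (χ ⟨ρ p.1 * ρ p.2 * (ρ (p.1 * p.2))⁻¹, hρ p.1 p.2⟩).toAdd, by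
    refine (mem_cocycles₂_iff _).2 fun g h j ↦ ?_
    rw [Representation.isTrivial_apply, ← toAdd_mul, ← toAdd_mul, ← map_mul, ← map_mul]
    exact congrArg (fun n ↦ (χ n).toAdd) (Subtype.ext (factorSet_mul_eq hN hρ g h j))⟩

theorem factorSet_apply (hN : N ≤ Subgroup.center E) (hρ : ∀ g h, ρ g * ρ h * (ρ (g * h))⁻¹ ∈ N)
    (χ : N →* Multiplicative A) (g h : G) :
    factorSet A hN hρ χ (g, h) = (χ ⟨ρ g * ρ h * (ρ (g * h))⁻¹, hρ g h⟩).toAdd := rfl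

theorem relatorValue_factorSet_sq (hN : N ≤ Subgroup.center E)
    (hρ : ∀ g h, ρ g * ρ h * (ρ (g * h))⁻¹ ∈ N) (χ : N →* Multiplicative A) {α : Type*} {s : α → G}
    {i : α} (hs : s i ^ 2 = 1) {z : N} (hz : ρ (s i) ^ 2 = z) :
    CocycleExtension.relatorValue s (.of i ^ 2) (factorSet A hN hρ χ) = (χ z).toAdd := by
  have hfib : (CocycleExtension.liftWord (factorSet A hN hρ χ) s (.of i ^ 2)).fib =
      factorSet A hN hρ χ (s i, s i) := by
    simp [pow_two]
  change _ + factorSet A hN hρ χ (1, 1) = _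
  rw [hfib, factorSet_apply, factorSet_apply, ← toAdd_mul, ← map_mul]
  refine congrArg (fun n ↦ (χ n).toAdd) (Subtype.ext ?_)
  change ρ (s i) * ρ (s i) * (ρ (s i * s i))⁻¹ * (ρ 1 * ρ 1 * (ρ (1 * 1))⁻¹) = z
  rw [← pow_two, ← pow_two, hs, hz, mul_one, mul_inv_cancel_right, inv_mul_cancel_right]

end FactorSet

/-! ### The cohomology of `A₅` -/

section SpecialLinear

open Matrix MatrixGroups

/-- Lifts to `SL(2, 5)` of generators of `PSL(2, 5)` with the relations of `D(2, 5, 3)`: the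
reductions of the standard generators of `SL(2, ℤ)`. -/
def sl2Generator : Fin 2 → SL(2, ZMod 5) :=
  ![⟨!![0, -1; 1, 0], by decide⟩, ⟨!![1, 1; 0, 1], by decide⟩]

theorem zpowers_neg_one_le_center (E : Type*) [Group E] [HasDistribNeg E] :
    Subgroup.zpowers (-1 : E) ≤ Subgroup.center E := by
  rw [Subgroup.zpowers_le, Subgroup.mem_center_iff]
  exact fun g ↦ (Commute.neg_one_right g).eq

instance normal_zpowers_neg_one (E : Type*) [Group E] [HasDistribNeg E] :
    (Subgroup.zpowers (-1 : E)).Normal :=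
  ⟨fun n hn g ↦ by
    rwa [Subgroup.mem_center_iff.1 (zpowers_neg_one_le_center E hn) g, mul_inv_cancel_right]⟩

theorem sq_eq_one_of_mem_zpowers_neg_one {E : Type*} [Group E] [HasDistribNeg E] {g : E}
    (hg : g ∈ Subgroup.zpowers (-1 : E)) : g ^ 2 = 1 := by
  obtain ⟨n, rfl⟩ := hg
  change ((-1 : E) ^ n) ^ 2 = 1
  rw [← zpow_natCast, zpow_comm]
  simp

theorem IsVonDyckPair.quotient_mk {E : Type*} [Group E] {N : Subgroup E} [N.Normal] {l m n : ℕ}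
    {a b : E} (ha : a ^ l ∈ N) (hb : b ^ m ∈ N) (hab : (a * b) ^ n ∈ N) :
    IsVonDyckPair l m n (a : E ⧸ N) (b : E ⧸ N) :=
  ⟨(QuotientGroup.eq_one_iff _).2 ha, (QuotientGroup.eq_one_iff _).2 hb,
    (QuotientGroup.eq_one_iff _).2 hab⟩

theorem exists_hom_sl2_quotient :
    ∃ θ : alternatingGroup (Fin 5) →* SL(2, ZMod 5) ⧸ Subgroup.zpowers (-1 : SL(2, ZMod 5)),
      ∀ i, θ (icosahedralGenerator i) = sl2Generator i := by
  let s (i : Fin 2) : SL(2, ZMod 5) ⧸ Subgroup.zpowers (-1 : SL(2, ZMod 5)) := sl2Generator i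
  have hs : IsVonDyckPair 2 5 3 (s 0) (s 1) := by
    have hS : sl2Generator 0 ^ 2 = -1 := by decide
    have hR : sl2Generator 1 ^ 5 = 1 := by decide
    have hSR : (sl2Generator 0 * sl2Generator 1) ^ 3 = -1 := by decide
    exact .quotient_mk (hS ▸ Subgroup.mem_zpowers _) (hR.symm ▸ one_mem _)
      (hSR ▸ Subgroup.mem_zpowers _)
  obtain ⟨e, he⟩ := exists_presentedGroup_vonDyckRelators_mulEquiv
  refine ⟨(PresentedGroup.toGroup hs.lift_eq_one).comp e.symm.toMonoidHom, fun i ↦ ?_⟩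
  simp [← he, s]

theorem exists_sl2_projective_lift :
    ∃ ρ : alternatingGroup (Fin 5) → SL(2, ZMod 5),
      (∀ g h, ρ g * ρ h * (ρ (g * h))⁻¹ ∈ Subgroup.zpowers (-1)) ∧
        ρ (icosahedralGenerator 0) ^ 2 = -1 := by
  obtain ⟨θ, hθ⟩ := exists_hom_sl2_quotient
  refine ⟨fun g ↦ (θ g).out, fun g h ↦ (QuotientGroup.eq_one_iff _).1 ?_, ?_⟩
  · simp
  · obtain ⟨⟨n, hn⟩, hxn⟩ := QuotientGroup.mk_out_eq_mul (Subgroup.zpowers (-1)) (sl2Generator 0)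
    have hcomm : Commute (sl2Generator 0) n :=
      Subgroup.mem_center_iff.1 (zpowers_neg_one_le_center _ hn) _
    simp only [hθ, hxn, hcomm.mul_pow, sq_eq_one_of_mem_zpowers_neg_one hn, mul_one]
    decide

theorem exists_monoidHom_zpowers_neg_one {E M : Type*} [Group E] [HasDistribNeg E]
    (hE : (-1 : E) ≠ 1) [Group M] {a : M} (ha : a ^ 2 = 1) :
    ∃ χ : Subgroup.zpowers (-1 : E) →* M, χ ⟨-1, Subgroup.mem_zpowers _⟩ = a := by
  have horder : orderOf (⟨-1, Subgroup.mem_zpowers _⟩ : Subgroup.zpowers (-1 : E)) = 2 := by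
    rw [Subgroup.orderOf_mk]
    exact orderOf_eq_prime (by simp) hE
  have hgen (x : Subgroup.zpowers (-1 : E)) :
      x ∈ Subgroup.zpowers (⟨-1, Subgroup.mem_zpowers _⟩ : Subgroup.zpowers (-1 : E)) := by
    obtain ⟨_, n, rfl⟩ := x
    exact ⟨n, rfl⟩
  exact ⟨monoidHomOfForallMemZpowers hgen (horder ▸ orderOf_dvd_of_pow_eq_one ha),
    monoidHomOfForallMemZpowers_apply_gen _ _⟩

end SpecialLinear

section AlternatingGroup

open groupCohomology CocycleExtension
open scoped MatrixGroups

variable {k : Type} [CommRing k] (A : Rep k (alternatingGroup (Fin 5))) [A.IsTrivial]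

theorem exists_cocycle_relatorValue_sq_eq {a : A} (ha : (2 : k) • a = 0) :
    ∃ f : cocycles₂ A, (2 : k) • f = 0 ∧ relatorValue icosahedralGenerator (.of 0 ^ 2) f = a := by
  obtain ⟨ρ, hρ, hx⟩ := exists_sl2_projective_lift
  obtain ⟨χ, hχ⟩ := exists_monoidHom_zpowers_neg_one (E := SL(2, ZMod 5)) (by decide)
    (a := Multiplicative.ofAdd a) ((pow_two _).trans ((two_smul k a).symm.trans ha))
  refine ⟨factorSet A (zpowers_neg_one_le_center _) hρ χ, ?_, ?_⟩
  · refine cocycles₂_ext fun g h ↦ ?_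
    have hsq (n : Subgroup.zpowers (-1 : SL(2, ZMod 5))) : (2 : k) • (χ n).toAdd = 0 := by
      have hn : n ^ 2 = 1 := Subtype.ext (sq_eq_one_of_mem_zpowers_neg_one n.2)
      rw [two_smul, ← toAdd_mul, ← map_mul, ← pow_two, hn, map_one, toAdd_one]
    exact hsq _
  · exact (relatorValue_factorSet_sq A _ _ χ isVonDyckPair_icosahedralGenerator.pow_left hx).trans
      (congrArg Multiplicative.toAdd hχ)

/-- The obstruction `15 u + 6 v - 10 w` to splitting the extension of a cocycle, where `u`, `v` and
`w` are the values of the relators `x²`, `r⁵` and `(x * r)³` of `A₅`. The coefficients are those of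
the linear form that vanishes on the triples `(2 a, 5 b, 3 (a + b))`. -/
def vonDyckInvariant : cocycles₂ A →ₗ[k] A :=
  (15 : k) • relatorValue icosahedralGenerator (.of 0 ^ 2) +
    (6 : k) • relatorValue icosahedralGenerator (.of 1 ^ 5) -
    (10 : k) • relatorValue icosahedralGenerator ((.of 0 * .of 1) ^ 3)

variable {A}

theorem mem_coboundaries₂_iff_vonDyckInvariant_eq_zero {f : cocycles₂ A} :
    ⇑f ∈ coboundaries₂ A ↔ vonDyckInvariant A f = 0 := by
  obtain ⟨e, he⟩ := exists_presentedGroup_vonDyckRelators_mulEquiv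
  simp only [mem_coboundaries₂_iff_relatorValue e, he, forall_mem_vonDyckRelators_iff,
    vonDyckInvariant, LinearMap.sub_apply, LinearMap.add_apply, LinearMap.smul_apply, map_pow,
    map_mul, FreeGroup.lift_apply_of, toAdd_pow, toAdd_mul]
  set u := relatorValue icosahedralGenerator (.of 0 ^ 2) f
  set v := relatorValue icosahedralGenerator (.of 1 ^ 5) f
  set w := relatorValue icosahedralGenerator ((.of 0 * .of 1) ^ 3) f
  constructor
  · rintro ⟨c, hu, hv, hw⟩
    linear_combination (norm := module) (15 : k) • hu + (6 : k) • hv - (10 : k) • hw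
  · intro h
    refine ⟨![.ofAdd ((7 : k) • u + (3 : k) • v - (5 : k) • w),
      .ofAdd ((3 : k) • u + v - (2 : k) • w)], ?_, ?_, ?_⟩
    all_goals simp only [Matrix.cons_val_zero, Matrix.cons_val_one, toAdd_ofAdd]
    · linear_combination (norm := module) h
    · linear_combination (norm := module) h
    · linear_combination (norm := module) (2 : k) • h

theorem two_smul_vonDyckInvariant (f : cocycles₂ A) : (2 : k) • vonDyckInvariant A f = 0 := by
  let p (i : Fin 2) : CocycleExtension f := ⟨0, icosahedralGenerator i⟩
  have hpow : ((p 0 * p 1) ^ 3) ^ 20 = (p 0 ^ 2) ^ 30 * (p 1 ^ 5) ^ 12 := by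
    simpa only [natCard_alternatingGroup_five, ← pow_mul] using mul_pow_card (p 0) (p 1)
  obtain ⟨hu, hv, hw⟩ := forall_mem_vonDyckRelators_iff.1 fun w hw ↦
    liftWord_eq_inl_relatorValue (f := f) icosahedralGenerator
      (isVonDyckPair_icosahedralGenerator.lift_eq_one w hw)
  simp only [map_pow, map_mul, liftWord_of] at hu hv hw
  set j := (toGroupExtension f).inl
  rw [hu, hv, hw, ← map_pow j, ← map_pow j, ← map_pow j, ← map_mul j] at hpow
  replace hpow := congrArg Multiplicative.toAdd ((toGroupExtension f).inl_injective hpow)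
  simp only [toAdd_pow, toAdd_mul, toAdd_ofAdd] at hpow
  simp only [vonDyckInvariant, LinearMap.sub_apply, LinearMap.add_apply, LinearMap.smul_apply]
  linear_combination (norm := module) -hpow

theorem range_vonDyckInvariant :
    LinearMap.range (vonDyckInvariant A) = Submodule.torsionBy k A 2 := by
  refine le_antisymm ?_ fun a ha ↦ ?_
  · rintro _ ⟨f, rfl⟩
    exact (Submodule.mem_torsionBy_iff _ _).2 (two_smul_vonDyckInvariant f)
  · rw [Submodule.mem_torsionBy_iff] at ha
    obtain ⟨f, hf, rfl⟩ := exists_cocycle_relatorValue_sq_eq A ha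
    have hval (w : FreeGroup (Fin 2)) : (2 : k) • relatorValue icosahedralGenerator w f = 0 := by
      rw [← map_smul, hf, map_zero]
    refine ⟨f, ?_⟩
    simp only [vonDyckInvariant, LinearMap.sub_apply, LinearMap.add_apply, LinearMap.smul_apply]
    linear_combination (norm := module) (7 : k) • hval (.of 0 ^ 2) + (3 : k) • hval (.of 1 ^ 5) -
      (5 : k) • hval ((.of 0 * .of 1) ^ 3)

variable (A) in
theorem stmt_2_general : Nonempty (groupCohomology A 2 ≃ₗ[k] Submodule.torsionBy k A 2) := by
  have hker : LinearMap.ker (H2π A).hom = LinearMap.ker (vonDyckInvariant A) := by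
    ext f
    exact (H2π_eq_zero_iff f).trans mem_coboundaries₂_iff_vonDyckInvariant_eq_zero
  have hsurj : Function.Surjective (H2π A).hom :=
    (ModuleCat.epi_iff_surjective (H2π A)).1 inferInstance
  exact ⟨((H2π A).hom.quotKerEquivOfSurjective hsurj).symm.trans <|
    (Submodule.quotEquivOfEq _ _ hker).trans <|
      (vonDyckInvariant A).quotKerEquivRange.trans <|
        LinearEquiv.ofEq _ _ range_vonDyckInvariant⟩

end AlternatingGroup

theorem nonempty_torsionBy_zmod_addEquiv (m n : ℕ) [NeZero m] :
    Nonempty (Submodule.torsionBy ℤ (ZMod m) n ≃+ ZMod (m.gcd n)) := by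
  have hker : (Submodule.torsionBy ℤ (ZMod m) n).toAddSubgroup =
      (nsmulAddMonoidHom (α := ZMod m) n).ker := by
    ext a
    simp
  have hcard : Nat.card (Submodule.torsionBy ℤ (ZMod m) n).toAddSubgroup = m.gcd n := by
    rw [hker, IsAddCyclic.card_nsmulAddMonoidHom_ker, Nat.card_zmod]
  have hcyclic : IsAddCyclic (Submodule.torsionBy ℤ (ZMod m) n).toAddSubgroup := inferInstance
  exact ⟨hcard ▸ (zmodAddCyclicAddEquiv hcyclic).symm⟩

/-- For every positive integer `m`, the second group cohomology
`H²(A₅, ℤ/m)` of the alternating group `A₅` with coefficients in `ℤ/m` (trivial action)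
is isomorphic, as an abelian group, to `ℤ/gcd(m, 2)`. -/
theorem stmt_2 (m : ℕ) (hm : 0 < m) :
    Nonempty
      ((groupCohomology (Rep.trivial ℤ (alternatingGroup (Fin 5)) (ZMod m)) 2) ≃+
        ZMod (Nat.gcd m 2)) := by
  have : NeZero m := ⟨hm.ne'⟩
  obtain ⟨e⟩ := stmt_2_general (Rep.trivial ℤ (alternatingGroup (Fin 5)) (ZMod m))
  obtain ⟨e'⟩ := nonempty_torsionBy_zmod_addEquiv m 2
  exact ⟨e.toAddEquiv.trans e'⟩
end

section
/- Let m = 3^r·m₊ with r ≥ 1 and gcd(m₊, 6) = 1. Let G be a finite group with a cyclic subgroup C of order m contained in the center of G, such that G/C is isomorphic to the alternating group A₄ and C has no complement in G. Then G is isomorphic to ℤ/m₊ × ((ℤ/2 × ℤ/2) ⋊_α ℤ/3^{r+1}), where α : ℤ/3^{r+1} → Aut(ℤ/2 × ℤ/2) is any homomorphism whose image has order 3. -/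
/-!
Let `f : G → A₄` be the extension, with kernel `C` of odd order. By Schur–Zassenhaus the Klein
four-subgroup `V` of `A₄` lifts to a subgroup `Q` of `G`, which is normal because `C` is central.
Let `T ≤ A₄` have order `3` and put `H = f⁻¹(T)`, so that `G = Q ⋊ H` and `C ≤ H` has index `3`. A
complement of `C` in `H`, multiplied by `Q`, would be a complement of `C` in `G`; so `H` is a
nonsplit central extension of `ℤ/3` by a cyclic group, hence cyclic. Its action on `Q` kills `C`
but is nontrivial since `V` is not central, so its image has order `3`; therefore the
factor `ℤ/m₊` of `H` splits off. Finally, `Aut V` has at most `3! < 3 ^ 2` elements, so it has a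
single subgroup of order `3`, and two maps from a cyclic group with the same image differ by an
automorphism of the source.
-/

open Subgroup Function

lemma exists_modEq_coprime {k d n : ℕ} (hd : d ≠ 0) (hn : n ≠ 0) (hk : k.Coprime d) :
    ∃ l, l ≡ k [MOD d] ∧ l.Coprime n := by
  have : NeZero (d * n) := ⟨mul_ne_zero hd hn⟩
  obtain ⟨u, hu⟩ := ZMod.unitsMap_surjective (Dvd.intro n rfl) (ZMod.unitOfCoprime k hk)
  refine ⟨u.val.val, ?_, (ZMod.val_coe_unit_coprime u).coprime_mul_left_right⟩
  rw [← ZMod.natCast_eq_natCast_iff, ← ZMod.coe_unitOfCoprime k hk, ← hu, ZMod.unitsMap_val,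
    ZMod.natCast_val]

lemma normal_of_le_center {G : Type*} [Group G] {C : Subgroup G} (hC : C ≤ center G) : C.Normal :=
  ⟨fun c hc g => by rwa [mem_center_iff.1 (hC hc) g, mul_inv_cancel_right]⟩

lemma isComplement'_of_isCompl {G : Type*} [Group G] {N K : Subgroup G} [N.Normal]
    (h : IsCompl N K) : N.IsComplement' K :=
  isComplement'_of_disjoint_and_mul_eq_univ h.disjoint (by rw [← normal_mul, h.sup_eq_top, coe_top])

section PrimeSubgroups

variable {G : Type*} [Group G]

lemma disjoint_of_prime_card_of_not_le {P Q : Subgroup G} (hP : (Nat.card P).Prime)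
    (h : ¬ P ≤ Q) : Disjoint P Q := by
  have : Fact (Nat.card P).Prime := ⟨hP⟩
  exact (subgroupOf_eq_bot.1 <|
    (Q.subgroupOf P).eq_bot_or_eq_top_of_prime_card.resolve_right (mt subgroupOf_eq_top.1 h)).symm

lemma sup_eq_top_of_prime_index_of_not_le {C K : Subgroup G} (hC : C.index.Prime)
    (h : ¬ K ≤ C) : C ⊔ K = ⊤ := by
  have hrel : C.relIndex (C ⊔ K) ≠ 1 := fun h1 => h (le_sup_right.trans (relIndex_eq_one.1 h1))
  have hmul : C.relIndex (C ⊔ K) * (C ⊔ K).index = C.index := relIndex_mul_index le_sup_left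
  exact index_eq_one.1 ((Nat.prime_mul_iff.1 (hmul ▸ hC)).resolve_right (fun h => hrel h.2)).2

lemma eq_of_card_eq_prime_of_card_lt_sq [Finite G] {p : ℕ} (hp : p.Prime)
    (hG : Nat.card G < p ^ 2) {P Q : Subgroup G} (hP : Nat.card P = p) (hQ : Nat.card Q = p) :
    P = Q := by
  by_contra hne
  have hle : ¬ P ≤ Q := fun h => hne (eq_of_le_of_card_ge h (hQ.trans hP.symm).le)
  have hdisj : Disjoint P Q := disjoint_of_prime_card_of_not_le (hP ▸ hp) hle
  have hcard := Nat.card_le_card_of_injective _ (mul_injective_of_disjoint hdisj)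
  rw [Nat.card_prod, hP, hQ, ← sq] at hcard
  exact hcard.not_gt hG

end PrimeSubgroups

lemma exists_mulEquiv_comp_eq_of_range_eq {B A : Type*} [CommGroup B] [Finite B] [IsCyclic B]
    [Group A] {φ ψ : B →* A} (h : φ.range = ψ.range) :
    ∃ σ : B ≃* B, φ.comp σ.toMonoidHom = ψ := by
  obtain ⟨b, hb⟩ := IsCyclic.exists_generator (α := B)
  have range_eq (χ : B →* A) : χ.range = zpowers (χ b) := by
    rw [MonoidHom.range_eq_map, ← (eq_top_iff' _).2 hb, MonoidHom.map_zpowers]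
  have hzpowers : zpowers (φ b) = zpowers (ψ b) := by rw [← range_eq, ← range_eq, h]
  have hfin : IsOfFinOrder (φ b) := φ.isOfFinOrder (isOfFinOrder_of_finite b)
  obtain ⟨k, hk : φ b ^ k = ψ b⟩ :=
    hfin.mem_powers_iff_mem_zpowers.2 (hzpowers ▸ mem_zpowers (ψ b))
  have hcop : k.Coprime (orderOf (φ b)) :=
    mem_zpowers_pow_iff.1 (hk ▸ hzpowers ▸ mem_zpowers (φ b))
  obtain ⟨l, hlk, hl⟩ :=
    exists_modEq_coprime (n := Nat.card B) hfin.orderOf_pos.ne' Nat.card_pos.ne' hcop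
  refine ⟨MulEquiv.ofBijective (powMonoidHom l : B →* B) (powCoprime hl.symm).bijective, ?_⟩
  refine (MonoidHom.eq_iff_eq_on_generator hb _ _).2 ?_
  calc φ (b ^ l) = φ b ^ l := map_pow φ b l
    _ = φ b ^ k := pow_eq_pow_iff_modEq.2 hlk
    _ = ψ b := hk

lemma card_mulAut_le_factorial (N : Type*) [Group N] [Finite N] :
    Nat.card (MulAut N) ≤ (Nat.card N - 1).factorial := by
  classical
  have hne (σ : MulAut N) (x : N) : x ∈ ({1}ᶜ : Set N) ↔ σ x ∈ ({1}ᶜ : Set N) := by simp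
  have hinj : Injective fun σ : MulAut N => σ.toEquiv.subtypeEquiv (hne σ) := by
    intro σ τ h
    ext x
    by_cases hx : x = 1
    · rw [hx, map_one, map_one]
    · exact congrArg Subtype.val (DFunLike.congr_fun h ⟨x, hx⟩)
  refine (Nat.card_le_card_of_injective _ hinj).trans_eq ?_
  rw [Nat.card_perm, Nat.card_coe_set_eq, Set.ncard_compl, Set.ncard_singleton]

section CyclicOfPrimeIndex

variable {G : Type*} [Group G] {C : Subgroup G}

lemma isComplement'_zpowers_of_pow_prime_index_eq_one [C.Normal] (hC : C.index.Prime) {y : G}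
    (hy : y ∉ C) (hpow : y ^ C.index = 1) : C.IsComplement' (zpowers y) := by
  have : Fact C.index.Prime := ⟨hC⟩
  have hle : ¬ zpowers y ≤ C := by rwa [zpowers_le]
  have hprime : (Nat.card (zpowers y)).Prime := by
    rwa [Nat.card_zpowers, orderOf_eq_prime hpow (ne_of_mem_of_not_mem C.one_mem hy).symm]
  exact isComplement'_of_isCompl ⟨(disjoint_of_prime_card_of_not_le hprime hle).symm,
    codisjoint_iff.2 (sup_eq_top_of_prime_index_of_not_le hC hle)⟩

-- If `z` generates `C`, `x ∉ C` and `x ^ p = z ^ k`, replacing `x` by `x * z ^ j` changes `k` by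
-- `p * j`: this reaches exponent `0` when `p ∣ k`, and an exponent prime to `|C|` otherwise.
lemma isCyclic_of_prime_index_of_forall_not_isComplement' [Finite C] [IsCyclic C]
    (hcen : C ≤ center G) (hC : C.index.Prime) (hnonsplit : ∀ K, ¬ C.IsComplement' K) :
    IsCyclic G := by
  have : C.Normal := normal_of_le_center hcen
  obtain ⟨x, hx⟩ : ∃ x, x ∉ C := by
    by_contra! h
    exact hC.ne_one (index_eq_one.2 ((eq_top_iff' C).2 h))
  obtain ⟨z, hz⟩ := C.isCyclic_iff_exists_zpowers_eq_top.1 ‹_›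
  have hzC (j : ℤ) : z ^ j ∈ C := hz ▸ zpow_mem_zpowers z j
  have hmul_notMem (j : ℤ) : x * z ^ j ∉ C := by rwa [C.mul_mem_cancel_right (hzC j)]
  have hfin : IsOfFinOrder z := finite_zpowers.1 (hz ▸ Set.toFinite (C : Set G))
  obtain ⟨k, hk : z ^ k = x ^ C.index⟩ :=
    hfin.mem_powers_iff_mem_zpowers.2 (by rw [hz]; exact C.pow_index_mem x)
  have hmul_pow (j : ℤ) : (x * z ^ j) ^ C.index = z ^ (k + C.index * j : ℤ) := by
    have hcomm : Commute x (z ^ j) := mem_center_iff.1 (hcen (hzC j)) x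
    rw [hcomm.mul_pow, ← hk, zpow_add, zpow_natCast, mul_comm (C.index : ℤ), zpow_mul,
      zpow_natCast]
  have hndvd : ¬ C.index ∣ k := by
    rintro ⟨q, rfl⟩
    refine hnonsplit _ (isComplement'_zpowers_of_pow_prime_index_eq_one hC (hmul_notMem (-q)) ?_)
    rw [hmul_pow, Nat.cast_mul, mul_neg, add_neg_cancel, zpow_zero]
  obtain ⟨l, hlk, hl⟩ := exists_modEq_coprime hC.ne_zero hfin.orderOf_pos.ne'
    (hC.coprime_iff_not_dvd.2 hndvd).symm
  obtain ⟨j, hj⟩ := Nat.modEq_iff_dvd.1 hlk.symm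
  have hpow : (x * z ^ j) ^ C.index = z ^ l := by
    rw [hmul_pow, ← hj, add_sub_cancel, zpow_natCast]
  have hCle : C ≤ zpowers (x * z ^ j) := by
    rw [← hz, zpowers_le]
    exact zpowers_le.2 (hpow ▸ npow_mem_zpowers _ _) (mem_zpowers_pow_iff.2 hl)
  refine isCyclic_iff_exists_zpowers_eq_top.2 ⟨x * z ^ j, ?_⟩
  rw [← sup_eq_right.2 hCle]
  exact sup_eq_top_of_prime_index_of_not_le hC (by rw [zpowers_le]; exact hmul_notMem j)

end CyclicOfPrimeIndex

section SemidirectProduct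

/-- A direct factor of the acting group which acts trivially is a direct factor of the semidirect
product. -/
def semidirectProductProdEquiv {A B N : Type*} [Group A] [Group B] [Group N] (φ : B →* MulAut N) :
    N ⋊[φ.comp (MonoidHom.snd A B)] (A × B) ≃* A × (N ⋊[φ] B) where
  toFun x := (x.right.1, ⟨x.left, x.right.2⟩)
  invFun x := ⟨x.2.left, x.1, x.2.right⟩
  left_inv _ := rfl
  right_inv _ := rfl
  map_mul' _ _ := rfl

lemma exists_nonempty_semidirectProduct_mulEquiv_prod {N H : Type*} [Group N] [Group H]
    [IsCyclic H] {a b : ℕ} (hab : a.Coprime b) (hH : Nat.card H = a * b) (φ : H →* MulAut N)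
    (hφ : (Nat.card φ.range).Coprime a) :
    ∃ ψ : Multiplicative (ZMod b) →* MulAut N, ψ.range = φ.range ∧
      Nonempty (N ⋊[φ] H ≃* Multiplicative (ZMod a) × (N ⋊[ψ] Multiplicative (ZMod b))) := by
  have hcard (n : ℕ) : Nat.card (Multiplicative (ZMod n)) = n := Nat.card_zmod n
  have : IsCyclic (Multiplicative (ZMod a) × Multiplicative (ZMod b)) :=
    Group.isCyclic_prod_iff.2 ⟨inferInstance, inferInstance, by rwa [hcard, hcard]⟩
  let e : Multiplicative (ZMod a) × Multiplicative (ZMod b) ≃* H :=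
    mulEquivOfCyclicCardEq (by rw [Nat.card_prod, hcard, hcard, hH])
  let ψ := φ.comp (e.toMonoidHom.comp (MonoidHom.inr _ _))
  have htriv (x : Multiplicative (ZMod a)) : φ (e (x, 1)) = 1 := by
    have hdvd : orderOf (φ (e (x, 1))) ∣ a := by
      refine orderOf_dvd_of_pow_eq_one ?_
      have hx : x ^ a = 1 := by simpa only [hcard] using pow_card_eq_one' (x := x)
      rw [← map_pow, ← map_pow, Prod.pow_mk, hx, one_pow, Prod.mk_one_one, map_one, map_one]
    exact orderOf_eq_one_iff.1
      (Nat.eq_one_of_dvd_coprimes hφ (φ.range.orderOf_dvd_natCard ⟨_, rfl⟩) hdvd)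
  have hψ (x : Multiplicative (ZMod a) × Multiplicative (ZMod b)) : φ (e x) = ψ x.2 := by
    calc φ (e x) = φ (e (x.1, 1)) * φ (e (1, x.2)) := by
          rw [← map_mul, ← map_mul, Prod.mk_mul_mk, mul_one, one_mul]
      _ = ψ x.2 := by rw [htriv, one_mul]; rfl
  have hrange : ψ.range = φ.range := by
    refine le_antisymm (fun _ ⟨y, hy⟩ => ⟨e (1, y), hy⟩) ?_
    rintro _ ⟨h, rfl⟩
    exact ⟨(e.symm h).2, by rw [← hψ, e.apply_symm_apply]⟩
  refine ⟨ψ, hrange, ⟨(SemidirectProduct.congr (MulEquiv.refl N) e.symm fun h => ?_).trans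
    (semidirectProductProdEquiv ψ)⟩⟩
  ext n
  simp [← hψ]

lemma exists_semidirectProduct_mulEquiv_of_mulEquiv {N N' H : Type*} [Group N] [Group N']
    [Group H] (e : N ≃* N') (φ : H →* MulAut N) :
    ∃ φ' : H →* MulAut N', Nat.card φ'.range = Nat.card φ.range ∧
      Nonempty (N ⋊[φ] H ≃* N' ⋊[φ'] H) := by
  let φ' : H →* MulAut N' := (MulAut.congr e).toMonoidHom.comp φ
  have hφ' : Nat.card φ'.range = Nat.card φ.range := by
    rw [MonoidHom.range_comp]
    exact card_map_of_injective (MulAut.congr e).injective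
  refine ⟨φ', hφ', ⟨SemidirectProduct.congr e (.refl H) fun h => ?_⟩⟩
  ext n
  simp [φ']

theorem nonempty_semidirectProduct_mulEquiv {V W B : Type*} [Group V] [IsKleinFour V] [Group W]
    [IsKleinFour W] [CommGroup B] [Finite B] [IsCyclic B] {φ : B →* MulAut V} {ψ : B →* MulAut W}
    (hφ : Nat.card φ.range = 3) (hψ : Nat.card ψ.range = 3) :
    Nonempty (V ⋊[φ] B ≃* W ⋊[ψ] B) := by
  obtain ⟨e⟩ := IsKleinFour.nonempty_mulEquiv (G₁ := V) (G₂ := W)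
  obtain ⟨φ', hφ', ⟨e'⟩⟩ := exists_semidirectProduct_mulEquiv_of_mulEquiv e φ
  have : Finite W := IsKleinFour.instFinite
  have hcard : Nat.card (MulAut W) < 3 ^ 2 :=
    (card_mulAut_le_factorial W).trans_lt (by rw [IsKleinFour.card_four]; decide)
  obtain ⟨σ, hσ⟩ := exists_mulEquiv_comp_eq_of_range_eq
    (eq_of_card_eq_prime_of_card_lt_sq Nat.prime_three hcard (hφ'.trans hφ) hψ)
  refine ⟨e'.trans (SemidirectProduct.congr (.refl W) σ.symm fun b => ?_)⟩
  rw [← hσ]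
  ext
  simp

end SemidirectProduct

section Complement

variable {G : Type*} [Group G] {C Q H : Subgroup G}

lemma sup_map_subtype_eq_of_isComplement'_subgroupOf (hCH : C ≤ H) {L : Subgroup H}
    (hL : (C.subgroupOf H).IsComplement' L) : C ⊔ L.map H.subtype = H := by
  rw [← map_subgroupOf_eq_of_le hCH, ← Subgroup.map_sup, hL.sup_eq_top, ← MonoidHom.range_eq_map,
    H.range_subtype]

lemma disjoint_map_subtype_of_isComplement'_subgroupOf (hCH : C ≤ H) {L : Subgroup H}
    (hL : (C.subgroupOf H).IsComplement' L) : Disjoint C (L.map H.subtype) := by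
  rw [← map_subgroupOf_eq_of_le hCH]
  exact disjoint_map H.subtype_injective hL.disjoint

lemma isComplement'_sup_map_subtype [C.Normal] [Q.Normal] (hQH : Q.IsComplement' H) (hCH : C ≤ H)
    {L : Subgroup H} (hL : (C.subgroupOf H).IsComplement' L) :
    C.IsComplement' (Q ⊔ L.map H.subtype) := by
  refine isComplement'_of_isCompl ⟨disjoint_def.2 fun hx hxQL => ?_, codisjoint_iff.2 ?_⟩
  · obtain ⟨q, hq, l, hl, rfl⟩ := mem_sup_of_normal_left.1 hxQL
    have hqH : q ∈ H := (H.mul_mem_cancel_right (map_subtype_le L hl)).1 (hCH hx)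
    obtain rfl : q = 1 := disjoint_def.1 hQH.disjoint hq hqH
    rw [one_mul] at hx ⊢
    exact disjoint_def.1 (disjoint_map_subtype_of_isComplement'_subgroupOf hCH hL) hx hl
  · rw [sup_left_comm, sup_map_subtype_eq_of_isComplement'_subgroupOf hCH hL, hQH.sup_eq_top]

lemma isCyclic_of_prime_relIndex_of_forall_not_isComplement' [Finite C] [IsCyclic C] [Q.Normal]
    (hQH : Q.IsComplement' H) (hcen : C ≤ center G) (hCH : C ≤ H) (hC : (C.relIndex H).Prime)
    (hnonsplit : ∀ K, ¬ C.IsComplement' K) : IsCyclic H := by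
  have : C.Normal := normal_of_le_center hcen
  have hcenH : C.subgroupOf H ≤ center H := fun c hc =>
    mem_center_iff.2 fun h => Subtype.ext (mem_center_iff.1 (hcen hc) h)
  have : IsCyclic (C.subgroupOf H) := (subgroupOfEquivOfLe hCH).isCyclic.2 ‹_›
  have : Finite (C.subgroupOf H) := .of_equiv C (subgroupOfEquivOfLe hCH).symm
  exact isCyclic_of_prime_index_of_forall_not_isComplement' hcenH hC fun L hL =>
    hnonsplit _ (isComplement'_sup_map_subtype hQH hCH hL)

lemma relIndex_centralizer_eq_of_prime_relIndex [IsMulCommutative Q] (hQH : Q ⊔ H = ⊤)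
    (hcen : C ≤ center G) (hC : (C.relIndex H).Prime) (hQ : ¬ Q ≤ center G) :
    (centralizer (Q : Set G)).relIndex H = C.relIndex H := by
  have hdvd : (centralizer (Q : Set G)).relIndex H ∣ C.relIndex H :=
    relIndex_dvd_of_le_left H (hcen.trans (center_le_centralizer _))
  refine ((Nat.dvd_prime hC).1 hdvd).resolve_left fun h => hQ ?_
  have hle : Q ⊔ H ≤ centralizer Q := sup_le Q.le_centralizer (relIndex_eq_one.1 h)
  exact centralizer_eq_top_iff_subset.1 (top_le_iff.1 (hQH ▸ hle))

end Complement

section CentralExtension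

variable {G A : Type*} [Group G] [Group A] {f : G →* A} {Q : Subgroup G} {V T : Subgroup A}

-- If `g * k * g⁻¹` and `k' ∈ Q` have the same image, they differ by a central element of `f.ker`,
-- whose order divides both `|f.ker|` and `|Q|`.
lemma normal_of_normal_map (hcen : f.ker ≤ center G)
    (hcop : (Nat.card f.ker).Coprime (Nat.card Q)) (hQ : (Q.map f).Normal) : Q.Normal := by
  refine ⟨fun k hk g => ?_⟩
  obtain ⟨k', hk', hfk' : f k' = _⟩ := hQ.conj_mem (f k) (mem_map_of_mem f hk) (f g)
  obtain ⟨z, hz⟩ : ∃ z, k' * z = g * k * g⁻¹ := ⟨_, mul_inv_cancel_left k' _⟩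
  have hzker : z ∈ f.ker := by
    rw [f.mem_ker, ← mul_eq_left (a := f k'), ← map_mul, hz, hfk']
    simp only [map_mul, map_inv]
  have hpow_card {y : G} (hy : y ∈ Q) : y ^ Nat.card Q = 1 :=
    orderOf_dvd_iff_pow_eq_one.1 (Q.orderOf_dvd_natCard hy)
  have hzpow : z ^ Nat.card Q = 1 := by
    have hcomm : Commute k' z := mem_center_iff.1 (hcen hzker) k'
    calc z ^ Nat.card Q = k' ^ Nat.card Q * z ^ Nat.card Q := by rw [hpow_card hk', one_mul]
      _ = g * k ^ Nat.card Q * g⁻¹ := by rw [← hcomm.mul_pow, hz, conj_pow]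
      _ = 1 := by rw [hpow_card hk, mul_one, mul_inv_cancel]
  have hz1 : z = 1 := orderOf_eq_one_iff.1 <| Nat.eq_one_of_dvd_coprimes hcop
    (f.ker.orderOf_dvd_natCard hzker) (orderOf_dvd_of_pow_eq_one hzpow)
  rwa [← hz, hz1, mul_one]

lemma relIndex_ker_comap (hf : Surjective f) : f.ker.relIndex (T.comap f) = Nat.card T := by
  rw [relIndex_ker, map_comap_eq_self_of_surjective hf]

lemma card_comap_of_surjective (hf : Surjective f) :
    Nat.card (T.comap f) = Nat.card f.ker * Nat.card T := by
  rw [← relIndex_bot_left, ← relIndex_mul_relIndex ⊥ _ _ bot_le (ker_le_comap f T),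
    relIndex_bot_left, relIndex_ker_comap hf]

lemma isComplement'_comap (hQ : Disjoint Q f.ker) (h : (Q.map f).IsComplement' T) :
    Q.IsComplement' (T.comap f) := by
  refine isComplement'_of_disjoint_and_mul_eq_univ (disjoint_def.2 fun hx hxT => ?_)
    (Set.eq_univ_of_forall fun g => ?_)
  · exact disjoint_def.1 hQ hx (disjoint_def.1 h.disjoint (mem_map_of_mem f hx) hxT)
  · obtain ⟨⟨⟨_, q, hq, rfl⟩, t⟩, hqt : f q * t = f g⟩ := h.2 (f g)
    refine ⟨q, hq, q⁻¹ * g, ?_, mul_inv_cancel_left q g⟩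
    rw [SetLike.mem_coe, mem_comap, map_mul, map_inv, ← hqt, inv_mul_cancel_left]
    exact t.2

lemma nonempty_mulEquiv_map_of_disjoint_ker (hQ : Disjoint Q f.ker) : Nonempty (Q ≃* Q.map f) := by
  refine ⟨MulEquiv.ofBijective (f.subgroupMap Q) ⟨?_, f.subgroupMap_surjective Q⟩⟩
  refine (injective_iff_map_eq_one _).2 fun q hq => Subtype.ext ?_
  exact disjoint_def.1 hQ q.2 (congrArg Subtype.val hq)

lemma exists_normal_map_eq_of_coprime (hf : Surjective f) (hcen : f.ker ≤ center G) [V.Normal]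
    (hcop : (Nat.card f.ker).Coprime (Nat.card V)) :
    ∃ Q : Subgroup G, Q.Normal ∧ Disjoint Q f.ker ∧ Q.map f = V := by
  have hker : f.ker ≤ V.comap f := ker_le_comap f V
  have hcop' : (Nat.card (f.ker.subgroupOf (V.comap f))).Coprime
      (f.ker.subgroupOf (V.comap f)).index := by
    rwa [Nat.card_congr (subgroupOfEquivOfLe hker).toEquiv, ← relIndex, relIndex_ker_comap hf]
  obtain ⟨L, hL⟩ := exists_right_complement'_of_coprime hcop'
  let Q := L.map (V.comap f).subtype
  have hdisj : Disjoint Q f.ker := (disjoint_map_subtype_of_isComplement'_subgroupOf hker hL).symm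
  have hmap : Q.map f = V := by
    rw [← map_comap_eq_self_of_surjective hf V,
      ← sup_map_subtype_eq_of_isComplement'_subgroupOf hker hL, Subgroup.map_sup,
      (Subgroup.map_eq_bot_iff _).2 le_rfl, bot_sup_eq]
  obtain ⟨e⟩ := nonempty_mulEquiv_map_of_disjoint_ker hdisj
  have hcopQ : (Nat.card f.ker).Coprime (Nat.card Q) := by
    rwa [Nat.card_congr e.toEquiv, hmap]
  exact ⟨Q, normal_of_normal_map hcen hcopQ (hmap ▸ ‹_›), hdisj, hmap⟩

lemma map_le_center_of_surjective (hf : Surjective f) (hQ : Q ≤ center G) :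
    Q.map f ≤ center A := by
  rintro _ ⟨q, hq, rfl⟩
  refine mem_center_iff.2 (hf.forall.2 fun g => ?_)
  rw [← map_mul, mem_center_iff.1 (hQ hq), map_mul]

theorem exists_mulEquiv_semidirectProduct_comap_of_forall_not_isComplement' [Finite f.ker]
    [IsCyclic f.ker] [V.Normal] [IsMulCommutative V] (hf : Surjective f) (hcen : f.ker ≤ center G)
    (hcop : (Nat.card f.ker).Coprime (Nat.card V)) (hVT : V.IsComplement' T)
    (hT : (Nat.card T).Prime) (hV : ¬ V ≤ center A) (hnonsplit : ∀ K, ¬ f.ker.IsComplement' K) :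
    IsCyclic (T.comap f) ∧ ∃ φ : T.comap f →* MulAut V,
      Nat.card φ.range = Nat.card T ∧ Nonempty (G ≃* V ⋊[φ] T.comap f) := by
  obtain ⟨Q, hQ, hdisj, rfl⟩ := exists_normal_map_eq_of_coprime hf hcen hcop
  obtain ⟨e⟩ := nonempty_mulEquiv_map_of_disjoint_ker hdisj
  have : IsMulCommutative Q := ⟨⟨fun x y => e.injective (by
    rw [map_mul, map_mul, mul_comm' (e x)])⟩⟩
  have hQH : Q.IsComplement' (T.comap f) := isComplement'_comap hdisj hVT
  have hrel : f.ker.relIndex (T.comap f) = Nat.card T := relIndex_ker_comap hf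
  refine ⟨isCyclic_of_prime_relIndex_of_forall_not_isComplement' hQH hcen
    (ker_le_comap f T) (hrel ▸ hT) hnonsplit, ?_⟩
  let φ : T.comap f →* MulAut Q :=
    Q.normalizerMonoidHom.comp (inclusion (Q.normalizer_eq_top ▸ le_top))
  have hφ : Nat.card φ.range = Nat.card T := by
    rw [← index_ker, ← MonoidHom.comap_ker, normalizerMonoidHom_ker, ← hrel]
    exact relIndex_centralizer_eq_of_prime_relIndex hQH.sup_eq_top hcen (hrel ▸ hT)
      (mt (map_le_center_of_surjective hf) hV)
  obtain ⟨φ', hφ', ⟨e'⟩⟩ := exists_semidirectProduct_mulEquiv_of_mulEquiv e φ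
  exact ⟨φ', hφ'.trans hφ, ⟨(SemidirectProduct.mulEquivSubgroup hQH).symm.trans e'⟩⟩

end CentralExtension

lemma isKleinFour_of_mulEquiv {V W : Type*} [Group V] [IsKleinFour V] [Group W] (e : V ≃* W) :
    IsKleinFour W where
  card_four := (Nat.card_congr e.toEquiv).symm.trans IsKleinFour.card_four
  exponent_two := (Monoid.exponent_eq_of_mulEquiv e).symm.trans IsKleinFour.exponent_two

section AlternatingGroupFour

open alternatingGroup

lemma not_kleinFour_le_center : ¬ kleinFour (Fin 4) ≤ center (alternatingGroup (Fin 4)) := by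
  rw [center_eq_bot (Nat.card_fin 4).ge, le_bot_iff, ← card_eq_one,
    kleinFour_card_of_card_eq_four (Nat.card_fin 4)]
  decide

lemma exists_isComplement'_kleinFour :
    ∃ T, (kleinFour (Fin 4)).IsComplement' T ∧ Nat.card T = 3 := by
  have hV : Nat.card (kleinFour (Fin 4)) = 4 := kleinFour_card_of_card_eq_four (Nat.card_fin 4)
  have hindex : (kleinFour (Fin 4)).index = 3 := by
    have hmul := (kleinFour (Fin 4)).card_mul_index
    rw [hV, card_of_card_eq_four (Nat.card_fin 4)] at hmul
    lia
  have := normal_kleinFour (Nat.card_fin 4)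
  obtain ⟨T, hT⟩ := exists_right_complement'_of_coprime (N := kleinFour (Fin 4))
    (by rw [hV, hindex]; decide)
  exact ⟨T, hT, hT.symm.index_eq_card.symm.trans hindex⟩

end AlternatingGroupFour

/-- Let `m = 3^r · m₊` with `r ≥ 1` and `gcd(m₊, 6) = 1`. Let `G` be a finite
group with a cyclic subgroup `C` of order `m` contained in the center of `G`, such that
`G/C ≅ A₄` (encoded by a surjective homomorphism `f : G →* A₄` with kernel `C`) and `C` has no
complement in `G`. Then `G ≅ ℤ/m₊ × ((ℤ/2 × ℤ/2) ⋊_α ℤ/3^(r+1))`, where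
`α : ℤ/3^(r+1) → Aut(ℤ/2 × ℤ/2)` is any homomorphism whose image has order 3. -/
theorem stmt_8 (r mp m : ℕ) (hr : 1 ≤ r) (hmp : Nat.gcd mp 6 = 1) (hm : m = 3 ^ r * mp)
    (G : Type*) [Group G] [Finite G] (C : Subgroup G)
    (hcyc : IsCyclic C) (hcard : Nat.card C = m) (hcen : C ≤ Subgroup.center G)
    (f : G →* alternatingGroup (Fin 4)) (hsurj : Function.Surjective f) (hker : f.ker = C)
    (hnonsplit : ∀ K : Subgroup G, ¬ C.IsComplement' K)
    (α : Multiplicative (ZMod (3 ^ (r + 1))) →*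
      MulAut (Multiplicative (ZMod 2) × Multiplicative (ZMod 2)))
    (hα : Nat.card α.range = 3) :
    Nonempty
      (G ≃* (Multiplicative (ZMod mp) ×
        ((Multiplicative (ZMod 2) × Multiplicative (ZMod 2)) ⋊[α]
          Multiplicative (ZMod (3 ^ (r + 1)))))) := by
  subst hker
  have := alternatingGroup.normal_kleinFour (Nat.card_fin 4)
  have := alternatingGroup.kleinFour_isKleinFour (Nat.card_fin 4)
  have := IsKleinFour.isMulCommutative (G := alternatingGroup.kleinFour (Fin 4))
  have : IsKleinFour (Multiplicative (ZMod 2) × Multiplicative (ZMod 2)) :=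
    isKleinFour_of_mulEquiv (.prodMultiplicative _ _)
  obtain ⟨T, hVT, hT⟩ := exists_isComplement'_kleinFour
  obtain ⟨hmp2, hmp3⟩ : mp.Coprime 2 ∧ mp.Coprime 3 := Nat.coprime_mul_iff_right.1 hmp
  have hcop : (Nat.card f.ker).Coprime (Nat.card (alternatingGroup.kleinFour (Fin 4))) := by
    rw [hcard, hm, IsKleinFour.card_four (G := alternatingGroup.kleinFour (Fin 4))]
    exact .pow_right 2 (.mul_left (.pow_left r (by decide)) hmp2)
  obtain ⟨_, φ, hφ, ⟨e⟩⟩ := exists_mulEquiv_semidirectProduct_comap_of_forall_not_isComplement'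
    hsurj hcen hcop hVT (hT ▸ Nat.prime_three) not_kleinFour_le_center hnonsplit
  rw [hT] at hφ
  have hH : Nat.card (T.comap f) = mp * 3 ^ (r + 1) := by
    rw [card_comap_of_surjective hsurj, hcard, hm, hT]
    ring
  obtain ⟨ψ, hψ, ⟨e'⟩⟩ := exists_nonempty_semidirectProduct_mulEquiv_prod
    (hmp3.pow_right (r + 1)) hH φ (by rw [hφ]; exact hmp3.symm)
  obtain ⟨e''⟩ := nonempty_semidirectProduct_mulEquiv (hψ ▸ hφ) hα
  exact ⟨e.trans (e'.trans (.prodCongr (.refl _) e''))⟩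
end
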